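/- Let D be an open ear-decomposition of a 2-vertex-connected graph G with exactly φ(G) even ears, and let P be a 3-ear of D with endpoints x and z and internal vertices v and y, where v is adjacent to x and y is adjacent to z along P. Then D cannot contain both an ear Q1 with endpoints x and y and an ear Q2 with endpoints v and z such that Q1 and Q2 each have an even number of edges. -/

import Mathlib

open SimpleGraph

variable {V : Type*}

/-- An *ear* of a graph `G`: a walk of length at least `1` whose two endpoints may
coincide, but all of whose other vertices are distinct (from each other and from the
endpoints); i.e. the walk is an (open) path, or a cycle when the endpoints coincide. -/
structure Ear (G : SimpleGraph V) where
  a : V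
  b : V
  walk : G.Walk a b
  length_pos : 1 ≤ walk.length
  ear : (a ≠ b ∧ walk.IsPath) ∨ (∃ h : a = b, (walk.copy rfl h.symm).IsCycle)

namespace Ear

variable {G : SimpleGraph V}

/-- The set of vertices of an ear. -/
def vertices (P : Ear G) : Set V := {v | v ∈ P.walk.support}

/-- The (set of) endpoints of an ear. -/
def endpoints (P : Ear G) : Set V := {P.a, P.b}

/-- The set `in(P)` of internal vertices of an ear. -/
def internal (P : Ear G) : Set V := P.vertices \ P.endpoints

/-- The internal vertices of an ear, as a `Finset`. -/
def internalFinset [DecidableEq V] (P : Ear G) : Finset V :=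
  P.walk.support.toFinset \ {P.a, P.b}

/-- The list of edges of an ear. -/
def edges (P : Ear G) : List (Sym2 V) := P.walk.edges

/-- A *trivial* ear has a single edge. -/
def IsTrivial (P : Ear G) : Prop := P.walk.length = 1

/-- A *short* ear has `2` or `3` edges. -/
def IsShort (P : Ear G) : Prop := P.walk.length = 2 ∨ P.walk.length = 3

/-- A *long* ear has at least `4` edges. -/
def IsLong (P : Ear G) : Prop := 4 ≤ P.walk.length

/-- An *open* ear has distinct endpoints. -/
def IsOpen (P : Ear G) : Prop := P.a ≠ P.b

end Ear

/-- The trivial ear corresponding to a single edge `wy` of `G`. -/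
def trivialEar (G : SimpleGraph V) {w y : V} (h : G.Adj w y) : Ear G where
  a := w
  b := y
  walk := SimpleGraph.Walk.cons h SimpleGraph.Walk.nil
  length_pos := by simp
  ear := Or.inl ⟨h.ne, by simp [h.ne]⟩

/-- The set of vertices appearing in the root or in the first `i` ears (those with
index `< i`) of a putative ear-decomposition. -/
def priorVerts {G : SimpleGraph V} (root : V) (ears : List (Ear G)) (i : ℕ) : Set V :=
  insert root {v | ∃ j : Fin ears.length, (j : ℕ) < i ∧ v ∈ (ears.get j).vertices}

/-- An *ear-decomposition* of `G`: a root vertex `P₀` together with a sequence of ears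
`P₁, …, P_k` such that each ear shares exactly its endpoints with the set of vertices
appearing earlier, and every edge of `G` lies in exactly one ear. -/
structure EarDecomp (G : SimpleGraph V) where
  root : V
  ears : List (Ear G)
  endpoints_sub : ∀ i : Fin ears.length,
    (ears.get i).endpoints ⊆ priorVerts root ears (i : ℕ)
  internal_new : ∀ i : Fin ears.length,
    (ears.get i).internal ∩ priorVerts root ears (i : ℕ) = ∅
  edge_cover : ∀ e ∈ G.edgeSet, ∃! i : Fin ears.length, e ∈ (ears.get i).edges

namespace EarDecomp

variable {G : SimpleGraph V}

/-- An ear-decomposition is *open* if every ear except the first one is open. -/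
def IsOpen (D : EarDecomp G) : Prop :=
  ∀ i : Fin D.ears.length, 1 ≤ (i : ℕ) → (D.ears.get i).IsOpen

/-- The number of even ears of an ear-decomposition. -/
def evenEars (D : EarDecomp G) : ℕ :=
  D.ears.countP fun P => decide (Even P.walk.length)

/-- The ear with index `i` is *pendant*: it is nontrivial, and no other nontrivial ear
has an endpoint among its internal vertices. -/
def IsPendant (D : EarDecomp G) (i : Fin D.ears.length) : Prop :=
  ¬ (D.ears.get i).IsTrivial ∧
  ∀ j : Fin D.ears.length, j ≠ i → ¬ (D.ears.get j).IsTrivial →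
    (D.ears.get j).a ∉ (D.ears.get i).internal ∧ (D.ears.get j).b ∉ (D.ears.get i).internal

/-- A *nice* ear-decomposition: open, all short ears are pendant, and no edge of `G`
connects internal vertices of two different short ears. -/
def IsNice (D : EarDecomp G) : Prop :=
  D.IsOpen ∧
  (∀ i : Fin D.ears.length, (D.ears.get i).IsShort → D.IsPendant i) ∧
  (∀ i j : Fin D.ears.length, i ≠ j → (D.ears.get i).IsShort → (D.ears.get j).IsShort →
    ∀ u ∈ (D.ears.get i).internal, ∀ v ∈ (D.ears.get j).internal, ¬ G.Adj u v)

/-- The number `π` of pendant ears of an ear-decomposition. -/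
noncomputable def numPendant (D : EarDecomp G) : ℕ :=
  letI := Classical.decPred fun i : Fin D.ears.length => D.IsPendant i
  (Finset.univ.filter fun i : Fin D.ears.length => D.IsPendant i).card

/-- The set `E'` of edges lying in nontrivial ears of an ear-decomposition. -/
noncomputable def nontrivialEdges [DecidableEq V] (D : EarDecomp G) : Finset (Sym2 V) :=
  letI := Classical.decPred fun i : Fin D.ears.length => ¬ (D.ears.get i).IsTrivial
  (Finset.univ.filter fun i : Fin D.ears.length => ¬ (D.ears.get i).IsTrivial).biUnion
    fun i => (D.ears.get i).edges.toFinset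

/-- The eardrum `M` arising from the pendant short ears of an ear-decomposition: for each
pendant `2`-ear its internal vertex, and for each pendant `3`-ear the pair of its internal
vertices (joined by an edge). -/
noncomputable def eardrum [DecidableEq V] (D : EarDecomp G) : Finset (Finset V) :=
  letI := Classical.decPred fun i : Fin D.ears.length =>
    (D.ears.get i).IsShort ∧ D.IsPendant i
  ((Finset.univ.filter fun i : Fin D.ears.length =>
      (D.ears.get i).IsShort ∧ D.IsPendant i).image
    fun i => (D.ears.get i).internalFinset)

/-- The set `V_I` of internal vertices of the non-pendant ears (including the root). -/
noncomputable def VI [DecidableEq V] (D : EarDecomp G) : Finset V :=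
  letI := Classical.decPred fun i : Fin D.ears.length => D.IsPendant i
  insert D.root ((Finset.univ.filter fun i : Fin D.ears.length => ¬ D.IsPendant i).biUnion
    fun i => (D.ears.get i).internalFinset)

end EarDecomp

/-- `φ(G)`: the minimum number of even ears over all ear-decompositions of `G`. -/
noncomputable def phi (G : SimpleGraph V) : ℕ :=
  sInf {n | ∃ D : EarDecomp G, D.evenEars = n}

/-- A graph is 2-vertex-connected if it has at least `3` vertices and deleting any single
vertex leaves a connected graph. -/
def TwoVertexConnected {W : Type*} (G : SimpleGraph W) : Prop :=
  3 ≤ Nat.card W ∧ ∀ v : W, (G.induce ({v}ᶜ : Set W)).Connected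

/-- `OPT_2VC(G)`: the minimum number of edges of a 2-vertex-connected spanning subgraph. -/
noncomputable def OPT2VC {W : Type*} (G : SimpleGraph W) : ℕ :=
  sInf {n | ∃ H : SimpleGraph W, H ≤ G ∧ TwoVertexConnected H ∧ H.edgeSet.ncard = n}

/-- An *eardrum* in `G`: a set of pairwise vertex-disjoint subgraphs, each consisting of a
single vertex or a single edge (encoded by their vertex sets). -/
def IsEardrum [DecidableEq V] (G : SimpleGraph V) (M : Finset (Finset V)) : Prop :=
  (∀ f ∈ M, (∃ v, f = {v}) ∨ (∃ u v, G.Adj u v ∧ f = {u, v})) ∧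
  ∀ f ∈ M, ∀ g ∈ M, f ≠ g → Disjoint f g

/-- `V(M)`: the set of vertices of the members of an eardrum. -/
def eardrumVerts (M : Finset (Finset V)) : Set V := {v | ∃ f ∈ M, v ∈ f}

/-- An *earmuff* for the eardrum `M`: a collection of paths `P_f`, for `f` in a subset
`F ⊆ M` (here given as a duplicate-free list of pairs `(f, P_f)`), such that each `P_f` is
a path whose set of internal vertices is exactly the vertex set of `f` (containing the
edge of `f` when `f` is an edge), whose two distinct endpoints lie outside `V(M)`, and
such that the union of all the paths is a forest. -/
structure Earmuff (G : SimpleGraph V) (M : Finset (Finset V)) where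
  pairs : List (Finset V × Ear G)
  nodup_fst : (pairs.map Prod.fst).Nodup
  mem_M : ∀ pr ∈ pairs, pr.1 ∈ M
  is_path : ∀ pr ∈ pairs, pr.2.a ≠ pr.2.b ∧ pr.2.walk.IsPath
  internal_eq : ∀ pr ∈ pairs, pr.2.internal = ↑pr.1
  edge_mem : ∀ pr ∈ pairs, ∀ u v : V, u ∈ pr.1 → v ∈ pr.1 → u ≠ v → s(u, v) ∈ pr.2.edges
  ends_outside : ∀ pr ∈ pairs, pr.2.a ∉ eardrumVerts M ∧ pr.2.b ∉ eardrumVerts M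
  forest : (SimpleGraph.fromEdgeSet {e : Sym2 V | ∃ pr ∈ pairs, e ∈ pr.2.edges}).IsAcyclic

/-- `µ(G, M)`: the maximum size of an earmuff for `M` in `G`. -/
noncomputable def mu (G : SimpleGraph V) (M : Finset (Finset V)) : ℕ :=
  sSup {n | ∃ em : Earmuff G M, em.pairs.length = n}

/-!
Reroute the three ears: `R = Q₁ ∪ {yv} ∪ Q₂` is an ear from `x` to `z`, and it can take the place
of `P` in the sequence because its internal vertices are exactly those of `P`, `Q₁` and `Q₂`. The
two edges `xv` and `yz` left over from `P` become trivial ears in place of `Q₁` and `Q₂`. Two even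
ears and an odd one are thereby replaced by three odd ears, so the number of even ears was not
minimum.
-/

namespace Ear

variable {G : SimpleGraph V}

theorem mem_vertices_iff {P : Ear G} {u : V} :
    u ∈ P.vertices ↔ u ∈ P.endpoints ∨ u ∈ P.internal := by
  have hsub : u ∈ P.endpoints → u ∈ P.vertices := by
    rintro (rfl | rfl)
    exacts [P.walk.start_mem_support, P.walk.end_mem_support]
  simp only [internal, Set.mem_sdiff]
  tauto

theorem edges_nodup (P : Ear G) : P.edges.Nodup := by
  obtain ⟨a, b, w, -, ⟨-, hpath⟩ | ⟨rfl, hcycle⟩⟩ := P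
  exacts [hpath.isTrail.edges_nodup, hcycle.edges_nodup]

@[simp]
theorem trivialEar_internal {u v : V} (h : G.Adj u v) : (trivialEar G h).internal = ∅ := by
  refine Set.sdiff_eq_empty.2 fun t ht ↦ ?_
  simpa [trivialEar, vertices, endpoints] using ht

@[simp]
theorem mem_trivialEar_edges {u v : V} (h : G.Adj u v) {e : Sym2 V} :
    e ∈ (trivialEar G h).edges ↔ e = s(u, v) := by
  simp [trivialEar, edges]

/-- `P.Joins u v`: the endpoints of the ear `P` are `u` and `v`, in either direction. -/
def Joins (P : Ear G) (u v : V) : Prop :=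
  (P.a = u ∧ P.b = v) ∨ (P.a = v ∧ P.b = u)

theorem Joins.endpoints_eq {P : Ear G} {u v : V} (h : P.Joins u v) : P.endpoints = {u, v} := by
  rcases h with ⟨rfl, rfl⟩ | ⟨rfl, rfl⟩
  exacts [rfl, Set.pair_comm _ _]

theorem Joins.exists_isPath {P : Ear G} {u v : V} (h : P.Joins u v) (huv : u ≠ v) :
    ∃ w : G.Walk u v, w.IsPath ∧ w.length = P.walk.length ∧
      (∀ t, t ∈ w.support ↔ t ∈ P.vertices) ∧ ∀ e, e ∈ w.edges ↔ e ∈ P.edges := by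
  have hpath : P.walk.IsPath := by
    rcases P.ear with ⟨-, hpath⟩ | ⟨hab, -⟩
    · exact hpath
    · rcases h with ⟨rfl, rfl⟩ | ⟨rfl, rfl⟩
      exacts [absurd hab huv, absurd hab.symm huv]
  rcases h with ⟨rfl, rfl⟩ | ⟨rfl, rfl⟩
  · exact ⟨P.walk, hpath, rfl, fun _ ↦ Iff.rfl, fun _ ↦ Iff.rfl⟩
  · exact ⟨P.walk.reverse, hpath.reverse, by simp, by simp [vertices], by simp [edges]⟩

/-- The ear that follows the path `p` from `x` to `y`, crosses the edge `yv`, and follows the path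
`q` from `v` to `z`. The two paths may only meet in `x = z`, in which case the ear is closed. -/
def bridge {x y v z : V} (p : G.Walk x y) (h : G.Adj y v) (q : G.Walk v z) (hp : p.IsPath)
    (hq : q.IsPath) (hxy : x ≠ y) (hvz : v ≠ z)
    (hpq : ∀ u ∈ p.support, u ∈ q.support → u = x ∧ u = z) : Ear G where
  a := x
  b := z
  walk := p.append (.cons h q)
  length_pos := by
    rw [Walk.length_append, Walk.length_cons]
    lia
  ear := by
    have hy : y ∉ q.support := fun hy ↦ hxy (hpq y p.end_mem_support hy).1.symm
    rcases eq_or_ne x z with rfl | hxz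
    · refine Or.inr ⟨rfl, hp.isCycle_append (hq.cons hy) ?_ (Or.inr ?_)⟩
      · intro u hup huq
        obtain rfl : u = x := (hpq u (List.mem_of_mem_tail hup) (by simpa using huq)).1
        exact (List.nodup_cons.1 (p.cons_tail_support.symm ▸ hp.support_nodup)).1 hup
      · simpa [Nat.pos_iff_ne_zero] using mt Walk.eq_of_length_eq_zero hvz
    · refine Or.inl ⟨hxz, .mk' ?_⟩
      rw [Walk.support_append, Walk.support_cons, List.tail_cons, List.nodup_append']
      refine ⟨hp.support_nodup, hq.support_nodup, fun u hup huq ↦ hxz ?_⟩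
      obtain ⟨hux, huz⟩ := hpq u hup huq
      exact hux.symm.trans huz

section bridge

variable {x y v z : V} {p : G.Walk x y} {h : G.Adj y v} {q : G.Walk v z} {hp : p.IsPath}
  {hq : q.IsPath} {hxy : x ≠ y} {hvz : v ≠ z}
  {hpq : ∀ u ∈ p.support, u ∈ q.support → u = x ∧ u = z}

theorem bridge_endpoints : (bridge p h q hp hq hxy hvz hpq).endpoints = {x, z} :=
  rfl

theorem mem_bridge_vertices {u : V} :
    u ∈ (bridge p h q hp hq hxy hvz hpq).vertices ↔ u ∈ p.support ∨ u ∈ q.support := by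
  have hy := p.end_mem_support
  simp only [vertices, bridge, Set.mem_ofPred_eq, Walk.mem_support_append_iff, Walk.support_cons,
    List.mem_cons]
  grind

theorem mem_bridge_edges {e : Sym2 V} :
    e ∈ (bridge p h q hp hq hxy hvz hpq).edges ↔ e = s(v, y) ∨ e ∈ p.edges ∨ e ∈ q.edges := by
  simp only [edges, bridge, Walk.edges_append, Walk.edges_cons, List.mem_append, List.mem_cons,
    Sym2.eq_swap (a := y)]
  tauto

theorem length_bridge :
    (bridge p h q hp hq hxy hvz hpq).walk.length = p.length + 1 + q.length := by
  simp only [bridge, Walk.length_append, Walk.length_cons]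
  lia

end bridge

/-- `P` is a 3-ear with vertices `x, v, y, z` in this order. The endpoints `x` and `z` may
coincide. -/
structure IsThreeEar (P : Ear G) (x v y z : V) : Prop where
  support_eq : P.walk.support = [x, v, y, z]

namespace IsThreeEar

variable {P : Ear G} {x v y z : V}

theorem edges_eq (h : IsThreeEar P x v y z) : P.edges = [s(x, v), s(v, y), s(y, z)] := by
  simp [edges, Walk.edges_eq_zipWith_support, h.support_eq]

theorem edges_ne (h : IsThreeEar P x v y z) :
    s(x, v) ≠ s(v, y) ∧ s(x, v) ≠ s(y, z) ∧ s(v, y) ≠ s(y, z) := by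
  have hnodup := P.edges_nodup
  rw [h.edges_eq] at hnodup
  simp only [List.nodup_cons, List.mem_cons, List.not_mem_nil] at hnodup
  tauto

theorem adj (h : IsThreeEar P x v y z) : G.Adj x v ∧ G.Adj v y ∧ G.Adj y z := by
  have hadj {s t : V} (hst : s(s, t) ∈ P.edges) : G.Adj s t := P.walk.adj_of_mem_edges hst
  rw [h.edges_eq] at hadj
  exact ⟨hadj (by simp), hadj (by simp), hadj (by simp)⟩

theorem ne_left (h : IsThreeEar P x v y z) : x ≠ y := by
  rintro rfl
  exact h.edges_ne.1 Sym2.eq_swap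

theorem ne_right (h : IsThreeEar P x v y z) : v ≠ z := by
  rintro rfl
  exact h.edges_ne.2.2 Sym2.eq_swap

theorem endpoints_eq (h : IsThreeEar P x v y z) : P.endpoints = {x, z} := by
  have ha : P.a = x := by simpa [h.support_eq] using P.walk.head_support.symm
  have hb : P.b = z := by simpa [h.support_eq] using P.walk.getLast_support.symm
  rw [endpoints, ha, hb]

theorem internal_eq (h : IsThreeEar P x v y z) : P.internal = {v, y} := by
  obtain ⟨hxv, -, hyz⟩ := h.adj
  ext u
  have hxv := hxv.ne
  have hyz := hyz.ne
  have hxy := h.ne_left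
  have hvz := h.ne_right
  rw [internal, h.endpoints_eq]
  simp only [vertices, h.support_eq, Set.mem_sdiff, Set.mem_ofPred_eq, List.mem_cons,
    List.not_mem_nil, Set.mem_insert_iff, Set.mem_singleton_iff]
  grind

end IsThreeEar

/-- Two ears `Q₁` and `Q₂` cross on a 3-ear `P` with vertices `x, v, y, z`: `Q₁` joins `x` and `y`,
and `Q₂` joins `v` and `z`. -/
structure IsCrossing (P Q₁ Q₂ : Ear G) (x v y z : V) : Prop extends IsThreeEar P x v y z where
  joins_left : Q₁.Joins x y
  joins_right : Q₂.Joins v z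

/-- The ear `R` runs through `Q₁`, the edge `vy` and `Q₂`, and can stand in for `P` in an
ear-decomposition: it attaches at the same vertices and takes over the internal vertices of all
three ears. -/
structure IsDetour (P Q₁ Q₂ R : Ear G) (v y : V) : Prop where
  endpoints_eq : R.endpoints = P.endpoints
  internal_eq : R.internal = P.internal ∪ Q₁.internal ∪ Q₂.internal
  mem_edges_iff : ∀ e, e ∈ R.edges ↔ e = s(v, y) ∨ e ∈ Q₁.edges ∨ e ∈ Q₂.edges
  length_eq : R.walk.length = Q₁.walk.length + 1 + Q₂.walk.length

theorem IsCrossing.exists_isDetour {P Q₁ Q₂ : Ear G} {x v y z : V}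
    (h : IsCrossing P Q₁ Q₂ x v y z)
    (h₁ : Disjoint Q₁.internal P.vertices) (h₂ : Disjoint Q₂.internal P.vertices)
    (h₁₂ : Disjoint Q₁.internal Q₂.internal) : ∃ R : Ear G, IsDetour P Q₁ Q₂ R v y := by
  obtain ⟨w₁, hw₁, hlength₁, hsupp₁, hedges₁⟩ := h.joins_left.exists_isPath h.ne_left
  obtain ⟨w₂, hw₂, hlength₂, hsupp₂, hedges₂⟩ := h.joins_right.exists_isPath h.ne_right
  have hxy := h.ne_left
  have hvz := h.ne_right
  obtain ⟨hxv, hvy, hyz⟩ := h.adj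
  have hxv := hxv.ne
  have hyz := hyz.ne
  simp only [Set.disjoint_left, mem_vertices_iff, h.endpoints_eq, h.internal_eq,
    Set.mem_insert_iff, Set.mem_singleton_iff] at h₁ h₂ h₁₂
  simp only [mem_vertices_iff, h.joins_left.endpoints_eq, Set.mem_insert_iff,
    Set.mem_singleton_iff] at hsupp₁
  simp only [mem_vertices_iff, h.joins_right.endpoints_eq, Set.mem_insert_iff,
    Set.mem_singleton_iff] at hsupp₂
  have hmeet : ∀ u ∈ w₁.support, u ∈ w₂.support → u = x ∧ u = z := by
    have hvy := hvy.ne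
    grind
  refine ⟨bridge w₁ hvy.symm w₂ hw₁ hw₂ hxy hvz hmeet, h.endpoints_eq.symm, ?_, fun e ↦ ?_, ?_⟩
  · ext u
    rw [internal, Set.mem_sdiff, mem_bridge_vertices, bridge_endpoints, h.internal_eq]
    simp only [Set.mem_union, Set.mem_insert_iff, Set.mem_singleton_iff]
    grind
  · rw [mem_bridge_edges, hedges₁, hedges₂]
  · rw [length_bridge, hlength₁, hlength₂]

end Ear

namespace EarDecomp

variable {G : SimpleGraph V}

theorem notMem_vertices_of_lt (D : EarDecomp G) {i j : Fin D.ears.length} (hji : j < i) {u : V}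
    (hu : u ∈ (D.ears.get i).internal) : u ∉ (D.ears.get j).vertices := fun hj ↦
  (D.internal_new i).subset ⟨hu, Or.inr ⟨j, hji, hj⟩⟩

theorem root_notMem_internal (D : EarDecomp G) (i : Fin D.ears.length) :
    D.root ∉ (D.ears.get i).internal := fun hroot ↦
  (D.internal_new i).subset ⟨hroot, Or.inl rfl⟩

theorem eq_of_mem_internal (D : EarDecomp G) {i j : Fin D.ears.length} {u : V}
    (hi : u ∈ (D.ears.get i).internal) (hj : u ∈ (D.ears.get j).internal) : i = j := by
  rcases lt_trichotomy i j with hij | hij | hij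
  exacts [absurd hi.1 (D.notMem_vertices_of_lt hij hj), hij,
    absurd hj.1 (D.notMem_vertices_of_lt hij hi)]

theorem lt_of_mem_internal_of_mem_endpoints (D : EarDecomp G) {i j : Fin D.ears.length} {u : V}
    (hi : u ∈ (D.ears.get i).internal) (hj : u ∈ (D.ears.get j).endpoints) : i < j := by
  rcases lt_trichotomy i j with hij | rfl | hij
  exacts [hij, absurd hj hi.2,
    absurd (Ear.mem_vertices_iff.2 (.inl hj)) (D.notMem_vertices_of_lt hij hi)]

theorem eq_root_or_mem_internal_of_mem_endpoints (D : EarDecomp G) {i : Fin D.ears.length} {u : V}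
    (hu : u ∈ (D.ears.get i).endpoints) :
    u = D.root ∨ ∃ j < i, u ∈ (D.ears.get j).internal := by
  induction i using WellFoundedLT.induction with
  | ind i ih =>
    obtain hroot | ⟨j, hji, hj⟩ := D.endpoints_sub i hu
    · exact .inl hroot
    · rcases Ear.mem_vertices_iff.1 hj with hend | hint
      · exact (ih j hji hend).imp_right fun ⟨k, hkj, hk⟩ ↦ ⟨k, hkj.trans hji, hk⟩
      · exact .inr ⟨j, hji, hint⟩

theorem evenEars_eq_card (D : EarDecomp G) :
    D.evenEars = Finset.card {i | Even (D.ears.get i).walk.length} := by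
  rw [evenEars, ← Multiset.coe_countP (fun P : Ear G ↦ Even P.walk.length)]
  nth_rw 1 [← List.ofFn_get D.ears]
  rw [← Fin.univ_val_map, Multiset.countP_map]
  rfl

theorem exists_of_family {n : ℕ} (root : V) (f : Fin n → Ear G)
    (hend : ∀ i, ∀ u ∈ (f i).endpoints, u = root ∨ ∃ j < i, u ∈ (f j).internal)
    (hroot : ∀ i, root ∉ (f i).internal)
    (hinj : ∀ i j u, u ∈ (f i).internal → u ∈ (f j).internal → i = j)
    (hedges : ∀ e ∈ G.edgeSet, ∃! i, e ∈ (f i).edges) :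
    ∃ D : EarDecomp G, D.evenEars = Finset.card {i | Even (f i).walk.length} := by
  obtain ⟨l, hl⟩ := List.equivSigmaTuple.surjective ⟨n, f⟩
  cases hl
  refine ⟨⟨root, l, fun i u hu ↦ ?_, fun i ↦ Set.eq_empty_of_forall_notMem ?_, hedges⟩,
    evenEars_eq_card _⟩
  · obtain hu | ⟨j, hji, hj⟩ := hend i u hu
    exacts [.inl hu, .inr ⟨j, hji, hj.1⟩]
  · rintro u ⟨hi, rfl | ⟨j, hji, hj⟩⟩
    · exact hroot i hi
    · rcases Ear.mem_vertices_iff.1 hj with hj | hj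
      · obtain rfl | ⟨k, hkj, hk⟩ := hend j u hj
        exacts [hroot i hi, (hkj.trans hji).ne (hinj k i u hk hi)]
      · exact (Fin.lt_def.2 hji).ne (hinj j i u hj hi)

/-- Handing internal vertices over to earlier ears only makes them available sooner as endpoints,
so the order of the ears stays valid. -/
theorem exists_of_regroup (D : EarDecomp G) (f : Fin D.ears.length → Ear G)
    (σ : Fin D.ears.length → Fin D.ears.length) (hσ : ∀ k, σ k ≤ k)
    (hint : ∀ i u, u ∈ (f i).internal ↔ ∃ k, σ k = i ∧ u ∈ (D.ears.get k).internal)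
    (hend : ∀ i, ∀ u ∈ (f i).endpoints,
      u ∈ (D.ears.get i).endpoints ∨ ∃ j < i, u ∈ (f j).internal)
    (hedges : ∀ e ∈ G.edgeSet, ∃! i, e ∈ (f i).edges) :
    ∃ D' : EarDecomp G, D'.evenEars = Finset.card {i | Even (f i).walk.length} := by
  refine exists_of_family D.root f (fun i u hu ↦ ?_) (fun i hi ↦ ?_) (fun i j u hi hj ↦ ?_) hedges
  · obtain hu | hu := hend i u hu
    · refine (D.eq_root_or_mem_internal_of_mem_endpoints hu).imp_right ?_
      rintro ⟨k, hki, hk⟩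
      exact ⟨σ k, (hσ k).trans_lt hki, (hint _ u).2 ⟨k, rfl, hk⟩⟩
    · exact .inr hu
  · obtain ⟨k, -, hk⟩ := (hint i _).1 hi
    exact D.root_notMem_internal k hk
  · obtain ⟨k, rfl, hk⟩ := (hint i u).1 hi
    obtain ⟨l, rfl, hl⟩ := (hint j u).1 hj
    rw [D.eq_of_mem_internal hk hl]

end EarDecomp

namespace Ear.IsCrossing

variable {G : SimpleGraph V} {D : EarDecomp G} {p q₁ q₂ : Fin D.ears.length} {x v y z : V}
  {R : Ear G}

theorem lt_left (h : IsCrossing (D.ears.get p) (D.ears.get q₁) (D.ears.get q₂) x v y z) :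
    p < q₁ :=
  D.lt_of_mem_internal_of_mem_endpoints (u := y) (by rw [h.internal_eq]; simp)
    (by rw [h.joins_left.endpoints_eq]; simp)

theorem lt_right (h : IsCrossing (D.ears.get p) (D.ears.get q₁) (D.ears.get q₂) x v y z) :
    p < q₂ :=
  D.lt_of_mem_internal_of_mem_endpoints (u := v) (by rw [h.internal_eq]; simp)
    (by rw [h.joins_right.endpoints_eq]; simp)

theorem left_ne_right
    (h : IsCrossing (D.ears.get p) (D.ears.get q₁) (D.ears.get q₂) x v y z) : q₁ ≠ q₂ := by
  rintro rfl
  have hy : y ∈ (D.ears.get q₁).endpoints := by rw [h.joins_left.endpoints_eq]; simp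
  rw [h.joins_right.endpoints_eq] at hy
  rcases hy with hyv | hyz
  exacts [h.adj.2.1.ne hyv.symm, h.adj.2.2.ne hyz]

theorem exists_isDetour_of_earDecomp
    (h : IsCrossing (D.ears.get p) (D.ears.get q₁) (D.ears.get q₂) x v y z) :
    ∃ R : Ear G, IsDetour (D.ears.get p) (D.ears.get q₁) (D.ears.get q₂) R v y :=
  h.exists_isDetour
    (Set.disjoint_left.2 fun _ ↦ D.notMem_vertices_of_lt h.lt_left)
    (Set.disjoint_left.2 fun _ ↦ D.notMem_vertices_of_lt h.lt_right)
    (Set.disjoint_left.2 fun _ hu₁ hu₂ ↦ h.left_ne_right (D.eq_of_mem_internal hu₁ hu₂))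

/-- The index of the rerouted ear that takes over the internal vertices of the `k`-th ear. -/
def absorb (p q₁ q₂ k : Fin D.ears.length) : Fin D.ears.length :=
  if k = q₁ ∨ k = q₂ then p else k

/-- The ears of `D` with the three crossing ones replaced: `R` takes the place of the 3-ear, and
the edges `xv` and `yz`, as trivial ears, take the places of the other two. -/
def reroute (h : IsCrossing (D.ears.get p) (D.ears.get q₁) (D.ears.get q₂) x v y z) (R : Ear G) :
    Fin D.ears.length → Ear G := fun i ↦
  if i = p then R
  else if i = q₁ then trivialEar G h.adj.1
  else if i = q₂ then trivialEar G h.adj.2.2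
  else D.ears.get i

theorem absorb_le (h : IsCrossing (D.ears.get p) (D.ears.get q₁) (D.ears.get q₂) x v y z)
    (k : Fin D.ears.length) : absorb p q₁ q₂ k ≤ k := by
  have hp₁ := h.lt_left.le
  have hp₂ := h.lt_right.le
  grind [absorb]

theorem mem_internal_reroute
    (h : IsCrossing (D.ears.get p) (D.ears.get q₁) (D.ears.get q₂) x v y z)
    (hR : IsDetour (D.ears.get p) (D.ears.get q₁) (D.ears.get q₂) R v y)
    (i : Fin D.ears.length) (u : V) :
    u ∈ (h.reroute R i).internal ↔
      ∃ k, absorb p q₁ q₂ k = i ∧ u ∈ (D.ears.get k).internal := by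
  have hp₁ := h.lt_left.ne
  have hp₂ := h.lt_right.ne
  unfold reroute absorb
  split_ifs with hip hi₁ hi₂
  · rw [hR.internal_eq]
    grind
  · rw [trivialEar_internal]
    grind
  · rw [trivialEar_internal]
    grind
  · grind

theorem mem_endpoints_or_mem_internal_of_mem_endpoints_reroute
    (h : IsCrossing (D.ears.get p) (D.ears.get q₁) (D.ears.get q₂) x v y z)
    (hR : IsDetour (D.ears.get p) (D.ears.get q₁) (D.ears.get q₂) R v y)
    {i : Fin D.ears.length} {u : V} (hu : u ∈ (h.reroute R i).endpoints) :
    u ∈ (D.ears.get i).endpoints ∨ ∃ j < i, u ∈ (h.reroute R j).internal := by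
  have hmid : v ∈ (h.reroute R p).internal ∧ y ∈ (h.reroute R p).internal := by
    rw [reroute, if_pos rfl, hR.internal_eq, h.internal_eq]
    simp
  have hp₁ := h.lt_left
  have hp₂ := h.lt_right
  unfold reroute at hu
  split_ifs at hu with hip hi₁ hi₂
  · subst hip
    exact .inl (hR.endpoints_eq ▸ hu)
  · subst hi₁
    rw [h.joins_left.endpoints_eq]
    rcases hu with rfl | rfl
    exacts [.inl (.inl rfl), .inr ⟨p, hp₁, hmid.1⟩]
  · subst hi₂
    rw [h.joins_right.endpoints_eq]
    rcases hu with rfl | rfl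
    exacts [.inr ⟨p, hp₂, hmid.2⟩, .inl (.inr rfl)]
  · exact .inl hu

theorem existsUnique_mem_edges_reroute
    (h : IsCrossing (D.ears.get p) (D.ears.get q₁) (D.ears.get q₂) x v y z)
    (hR : IsDetour (D.ears.get p) (D.ears.get q₁) (D.ears.get q₂) R v y)
    {e : Sym2 V} (he : e ∈ G.edgeSet) : ∃! i, e ∈ (h.reroute R i).edges := by
  classical
  obtain ⟨k, hk, hunique⟩ := D.edge_cover e he
  have howner (i : Fin D.ears.length) : e ∈ (D.ears.get i).edges ↔ i = k :=
    ⟨hunique i, fun hi ↦ hi ▸ hk⟩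
  have hP : k = p ↔ e = s(x, v) ∨ e = s(v, y) ∨ e = s(y, z) := by
    rw [eq_comm, ← howner, h.edges_eq]
    simp
  suffices hnew : ∀ i, e ∈ (h.reroute R i).edges ↔
      i = if e = s(x, v) then q₁ else if e = s(y, z) then q₂ else absorb p q₁ q₂ k from
    ⟨_, (hnew _).2 rfl, fun i ↦ (hnew i).1⟩
  intro i
  have hp₁ := h.lt_left.ne
  have hp₂ := h.lt_right.ne
  have hq := h.left_ne_right
  have hne := h.edges_ne
  unfold reroute absorb
  split_ifs <;>
    simp only [hR.mem_edges_iff, mem_trivialEar_edges, howner] <;>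
    grind

theorem exists_evenEars_lt
    (h : IsCrossing (D.ears.get p) (D.ears.get q₁) (D.ears.get q₂) x v y z)
    (heven₁ : Even (D.ears.get q₁).walk.length) (heven₂ : Even (D.ears.get q₂).walk.length) :
    ∃ D' : EarDecomp G, D'.evenEars < D.evenEars := by
  obtain ⟨R, hR⟩ := h.exists_isDetour_of_earDecomp
  obtain ⟨D', hD'⟩ := D.exists_of_regroup (h.reroute R) (absorb p q₁ q₂) h.absorb_le
    (h.mem_internal_reroute hR)
    (fun _ _ ↦ h.mem_endpoints_or_mem_internal_of_mem_endpoints_reroute hR)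
    (fun _ ↦ h.existsUnique_mem_edges_reroute hR)
  have hR_odd : ¬ Even R.walk.length := by
    rw [hR.length_eq]
    grind
  have htrivial_odd {s t : V} (hst : G.Adj s t) : ¬ Even (trivialEar G hst).walk.length :=
    Nat.not_even_one
  have heven_of_reroute (i : Fin D.ears.length) (hi : Even (h.reroute R i).walk.length) :
      Even (D.ears.get i).walk.length := by grind [reroute]
  have hq₁_odd : ¬ Even (h.reroute R q₁).walk.length := by
    rw [reroute, if_neg h.lt_left.ne', if_pos rfl]
    exact htrivial_odd _
  refine ⟨D', ?_⟩
  rw [hD', D.evenEars_eq_card]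
  refine Finset.card_lt_card ((Finset.ssubset_iff_of_subset ?_).2 ⟨q₁, ?_, ?_⟩)
  · exact Finset.monotone_filter_right _ fun i _ ↦ heven_of_reroute i
  · exact (Finset.mem_filter_univ _).2 heven₁
  · exact mt (Finset.mem_filter_univ _).1 hq₁_odd

end Ear.IsCrossing

theorem statement_4_general {V : Type*} (G : SimpleGraph V)
    (D : EarDecomp G) (hmin : D.evenEars = phi G)
    (p : Fin D.ears.length) (x v y z : V)
    (hsupp : (D.ears.get p).walk.support = [x, v, y, z]) :
    ¬ ∃ q1 q2 : Fin D.ears.length,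
      (((D.ears.get q1).a = x ∧ (D.ears.get q1).b = y) ∨
        ((D.ears.get q1).a = y ∧ (D.ears.get q1).b = x)) ∧
      (((D.ears.get q2).a = v ∧ (D.ears.get q2).b = z) ∨
        ((D.ears.get q2).a = z ∧ (D.ears.get q2).b = v)) ∧
      Even (D.ears.get q1).walk.length ∧ Even (D.ears.get q2).walk.length := by
  rintro ⟨q₁, q₂, hjoins₁, hjoins₂, heven₁, heven₂⟩
  obtain ⟨D', hlt⟩ := Ear.IsCrossing.exists_evenEars_lt ⟨⟨hsupp⟩, hjoins₁, hjoins₂⟩ heven₁ heven₂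
  exact (hlt.trans_eq hmin).not_ge (Nat.sInf_le ⟨D', rfl⟩)

/-- In an open ear-decomposition of a 2-vertex-connected graph with
exactly `φ(G)` even ears, if `P` is a `3`-ear with vertices `x, v, y, z` in order, then
the decomposition cannot contain both an ear `Q₁` with endpoints `x` and `y` and an ear
`Q₂` with endpoints `v` and `z` such that both `Q₁` and `Q₂` are even. -/
theorem statement_4 {V : Type*} [Fintype V] [DecidableEq V] (G : SimpleGraph V)
    (h2 : TwoVertexConnected G)
    (D : EarDecomp G) (hopen : D.IsOpen) (hmin : D.evenEars = phi G)
    (p : Fin D.ears.length) (x v y z : V)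
    (hsupp : (D.ears.get p).walk.support = [x, v, y, z]) :
    ¬ ∃ q1 q2 : Fin D.ears.length,
      (((D.ears.get q1).a = x ∧ (D.ears.get q1).b = y) ∨
        ((D.ears.get q1).a = y ∧ (D.ears.get q1).b = x)) ∧
      (((D.ears.get q2).a = v ∧ (D.ears.get q2).b = z) ∨
        ((D.ears.get q2).a = z ∧ (D.ears.get q2).b = v)) ∧
      Even (D.ears.get q1).walk.length ∧ Even (D.ears.get q2).walk.length := by
  exact statement_4_general G D hmin p x v y z hsupp
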